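/- Let (p_n) be a sequence of integers with p_n ≥ 2 for all n and p_n → ∞, let (κ_n) be a sequence in (0,∞), and for each n let θ_{n0} be a unit vector in ℝ^{p_n}. For each n let X_{n1},…,X_{nn} be i.i.d. random vectors with distribution FvML_{p_n}(θ_{n0},κ_n), set V_{ni}² := 1 − (X_{ni}'θ_{n0})² and L_n := (1/(n f₂(p_n,κ_n))) Σ_{i=1}^{n} V_{ni}². Then p_n · E[(L_n − 1)²] → 0 as n → ∞, where the expectation is taken under the n-fold product of FvML_{p_n}(θ_{n0},κ_n). -/

import Mathlib

open MeasureTheory Metric intervalIntegral Filter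
open scoped RealInnerProductSpace

/-- The surface-area measure on the unit sphere of `ℝ^p`. -/
noncomputable def sphereSurface (p : ℕ) :
    Measure (sphere (0 : EuclideanSpace ℝ (Fin p)) 1) :=
  (volume : Measure (EuclideanSpace ℝ (Fin p))).toSphere

/-- The Fisher–von Mises–Langevin distribution `FvML_p(θ,κ)`: the probability measure on
the unit sphere with density `x ↦ exp(κ x'θ) / ∫ exp(κ y'θ) dσ(y)` with respect to the
surface-area measure `σ`. -/
noncomputable def fvml (p : ℕ) (θ : EuclideanSpace ℝ (Fin p)) (κ : ℝ) :
    Measure (sphere (0 : EuclideanSpace ℝ (Fin p)) 1) :=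
  (sphereSurface p).withDensity fun x =>
    ENNReal.ofReal (Real.exp (κ * ⟪(x : EuclideanSpace ℝ (Fin p)), θ⟫) /
      ∫ y : sphere (0 : EuclideanSpace ℝ (Fin p)) 1,
        Real.exp (κ * ⟪(y : EuclideanSpace ℝ (Fin p)), θ⟫) ∂(sphereSurface p))

/-- `mInt p κ ℓ = ∫_{-1}^1 u^ℓ (1-u²)^{(p-3)/2} exp(κ u) du`. -/
noncomputable def mInt (p : ℕ) (κ : ℝ) (ℓ : ℕ) : ℝ :=
  ∫ u in (-1 : ℝ)..1, u ^ ℓ * (1 - u ^ 2) ^ (((p : ℝ) - 3) / 2) * Real.exp (κ * u)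

/-- `e₂(p,κ) = E[U²]` under `FvML_p(θ,κ)`. -/
noncomputable def e2 (p : ℕ) (κ : ℝ) : ℝ := mInt p κ 2 / mInt p κ 0

/-- `f₂(p,κ) = E[1-U²]` under `FvML_p(θ,κ)`. -/
noncomputable def f2 (p : ℕ) (κ : ℝ) : ℝ := 1 - e2 p κ

section Sphere

variable {E : Type*} [NormedAddCommGroup E] [InnerProductSpace ℝ E] [FiniteDimensional ℝ E]
  [MeasurableSpace E] [BorelSpace E]

/-- Polar integration of a product of an angular and a radial function. -/
lemma lintegral_angular_mul_radial [Nontrivial E] (μ : Measure E) [μ.IsAddHaarMeasure]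
    {h : E → ENNReal} (hh : Measurable h) {G : ℝ → ENNReal} (hG : Measurable G) :
    ∫⁻ x, h (‖x‖⁻¹ • x) * G ‖x‖ ∂μ = (∫⁻ s : sphere (0 : E) 1, h s ∂μ.toSphere) *
      ∫⁻ r in Set.Ioi 0, ENNReal.ofReal (r ^ (Module.finrank ℝ E - 1)) * G r := by
  calc
    _ = ∫⁻ x : ({(0)}ᶜ : Set E), h (‖x.1‖⁻¹ • x.1) * G ‖x.1‖ ∂(μ.comap (↑)) := by
      rw [lintegral_subtype_comap (measurableSet_singleton _).compl
        fun x ↦ h (‖x‖⁻¹ • x) * G ‖x‖, restrict_compl_singleton]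
    _ = ∫⁻ x, h x.1 * G x.2 ∂μ.toSphere.prod (.volumeIoiPow (Module.finrank ℝ E - 1)) := by
      rw [← μ.measurePreserving_homeomorphUnitSphereProd.lintegral_comp_emb
        (Homeomorph.measurableEmbedding _)]
      simp
    _ = (∫⁻ s : sphere (0 : E) 1, h s ∂μ.toSphere) *
        ∫⁻ r : Set.Ioi (0 : ℝ), G r ∂.volumeIoiPow (Module.finrank ℝ E - 1) :=
      lintegral_prod_mul (f := fun s : sphere (0 : E) 1 => h s)
        (g := fun r : Set.Ioi (0 : ℝ) => G r) (hh.comp measurable_subtype_coe).aemeasurable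
        (hG.comp measurable_subtype_coe).aemeasurable
    _ = _ := by
      rw [Measure.volumeIoiPow, lintegral_withDensity_eq_lintegral_mul _ (by fun_prop)
        (g := fun r : Set.Ioi (0 : ℝ) => G r) (hG.comp measurable_subtype_coe)]
      congr 1
      exact lintegral_subtype_comap measurableSet_Ioi
        fun r ↦ ENNReal.ofReal (r ^ (Module.finrank ℝ E - 1)) * G r

/-- The volume of the whole space disintegrates along the line spanned by a unit vector. -/
lemma exists_lintegral_eq_orthogonal_span (θ : E) (hθ : ‖θ‖ = 1) :
    ∃ c : NNReal, c ≠ 0 ∧ ∀ Q : ℝ → ℝ → ENNReal, Measurable (Function.uncurry Q) →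
      c * ∫⁻ x : E, Q ⟪x, θ⟫ ‖x‖ = ∫⁻ t : ℝ, ∫⁻ y : (ℝ ∙ θ)ᗮ, Q t √(t ^ 2 + ‖y‖ ^ 2) := by
  have hθ0 : θ ≠ 0 := by rintro rfl; simp at hθ
  have orth (y : (ℝ ∙ θ)ᗮ) : ⟪(y : E), θ⟫ = 0 :=
    (Submodule.mem_orthogonal_singleton_iff_inner_left.1 y.2)
  let L₀ : ℝ × (ℝ ∙ θ)ᗮ →ₗ[ℝ] E :=
    (LinearMap.toSpanSingleton ℝ E θ).coprod ((ℝ ∙ θ)ᗮ).subtype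
  have hL₀ (z : ℝ × (ℝ ∙ θ)ᗮ) : L₀ z = z.1 • θ + z.2 := rfl
  have hnorm (z : ℝ × (ℝ ∙ θ)ᗮ) : ‖L₀ z‖ = √(z.1 ^ 2 + ‖z.2‖ ^ 2) := by
    rw [eq_comm, Real.sqrt_eq_iff_mul_self_eq (by positivity) (norm_nonneg _), ← pow_two, hL₀,
      norm_add_sq_real, inner_smul_left, real_inner_comm, orth, norm_smul, hθ]
    simp
  have hinner (z : ℝ × (ℝ ∙ θ)ᗮ) : ⟪L₀ z, θ⟫ = z.1 := by
    rw [hL₀, inner_add_left, orth, inner_smul_left, real_inner_self_eq_norm_sq, hθ]; simp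
  have hinj : Function.Injective L₀ := by
    rw [← LinearMap.ker_eq_bot, LinearMap.ker_eq_bot']
    intro z hz
    have h1 := hnorm z
    have h2 := hinner z
    rw [hz, inner_zero_left] at h2
    rw [hz, norm_zero, ← h2] at h1
    ext
    · exact h2.symm
    · simpa [eq_comm] using h1
  have hrank : Module.finrank ℝ (ℝ × (ℝ ∙ θ)ᗮ) = Module.finrank ℝ E := by
    rw [Module.finrank_prod, ← Submodule.finrank_add_finrank_orthogonal (ℝ ∙ θ),
      finrank_span_singleton hθ0, Module.finrank_self]
  let L : (ℝ × (ℝ ∙ θ)ᗮ) ≃L[ℝ] E :=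
    (LinearEquiv.ofInjectiveOfFinrankEq L₀ hinj hrank).toContinuousLinearEquiv
  have hL (z) : L z = L₀ z := rfl
  have hvol : (volume : Measure (ℝ × (ℝ ∙ θ)ᗮ)).IsAddHaarMeasure := by
    rw [Measure.volume_eq_prod]; infer_instance
  have hadd : (Measure.map L (volume : Measure (ℝ × (ℝ ∙ θ)ᗮ))).IsAddHaarMeasure := inferInstance
  refine ⟨Measure.addHaarScalarFactor (Measure.map L (volume : Measure (ℝ × (ℝ ∙ θ)ᗮ))) volume,
    (Measure.addHaarScalarFactor_pos_of_isAddHaarMeasure _ _).ne', fun Q hQ => ?_⟩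
  have hQ' : Measurable fun x : E => Q ⟪x, θ⟫ ‖x‖ :=
    hQ.comp ((measurable_id.inner_const).prodMk measurable_norm)
  have := Measure.isAddLeftInvariant_eq_smul
    (Measure.map L (volume : Measure (ℝ × (ℝ ∙ θ)ᗮ))) volume
  calc
    _ = ∫⁻ x : E, Q ⟪x, θ⟫ ‖x‖ ∂(Measure.map L (volume : Measure (ℝ × (ℝ ∙ θ)ᗮ))) := by
      conv_rhs => rw [this]
      rw [lintegral_smul_measure]; rfl
    _ = ∫⁻ z : ℝ × (ℝ ∙ θ)ᗮ, Q z.1 √(z.1 ^ 2 + ‖z.2‖ ^ 2) := by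
      rw [lintegral_map hQ' L.continuous.measurable]
      simp only [hL, hnorm, hinner]
    _ = _ := by
      rw [Measure.volume_eq_prod, lintegral_prod]
      exact (hQ.comp (by fun_prop : Measurable fun z : ℝ × (ℝ ∙ θ)ᗮ =>
        (z.1, √(z.1 ^ 2 + ‖z.2‖ ^ 2)))).aemeasurable

/-- Polar coordinates on the upper half plane, with a density `s ^ q`. -/
lemma lintegral_halfPlane_polar (q : ℕ) {F G : ℝ → ENNReal} (hF : Measurable F)
    (hG : Measurable G) :
    ∫⁻ t : ℝ, ∫⁻ s in Set.Ioi (0 : ℝ), ENNReal.ofReal (s ^ q) *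
        (F ((√(t ^ 2 + s ^ 2))⁻¹ * t) * G √(t ^ 2 + s ^ 2)) =
      (∫⁻ φ in Set.Ioo 0 Real.pi, ENNReal.ofReal (Real.sin φ ^ q) * F (Real.cos φ)) *
        ∫⁻ r in Set.Ioi 0, ENNReal.ofReal (r ^ (q + 1)) * G r := by
  let f : ℝ × ℝ → ENNReal := fun z => (Set.Ioi (0 : ℝ)).indicator
    (fun s => ENNReal.ofReal (s ^ q) *
      (F ((√(z.1 ^ 2 + s ^ 2))⁻¹ * z.1) * G √(z.1 ^ 2 + s ^ 2))) z.2
  have hf : Measurable f := by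
    have : f = (Prod.snd ⁻¹' Set.Ioi (0 : ℝ)).indicator (fun z => ENNReal.ofReal (z.2 ^ q) *
      (F ((√(z.1 ^ 2 + z.2 ^ 2))⁻¹ * z.1) * G √(z.1 ^ 2 + z.2 ^ 2))) := rfl
    rw [this]
    exact Measurable.indicator (by fun_prop) (measurable_snd measurableSet_Ioi)
  calc
    _ = ∫⁻ t : ℝ, ∫⁻ s : ℝ, f (t, s) := by
      simp only [f, lintegral_indicator measurableSet_Ioi]
    _ = ∫⁻ z : ℝ × ℝ, f z := by rw [Measure.volume_eq_prod, lintegral_prod _ hf.aemeasurable]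
    _ = ∫⁻ z in Set.Ioi (0 : ℝ) ×ˢ Set.Ioo (-Real.pi) Real.pi,
        (ENNReal.ofReal (z.1 ^ (q + 1)) * G z.1) *
        (Set.Ioo 0 Real.pi).indicator
          (fun φ => ENNReal.ofReal (Real.sin φ ^ q) * F (Real.cos φ)) z.2 := by
      rw [← lintegral_comp_polarCoord_symm]
      refine setLIntegral_congr_fun (measurableSet_Ioi.prod measurableSet_Ioo) ?_
      rintro ⟨r, φ⟩ ⟨hr, hφ⟩
      simp only [Set.mem_Ioi, Set.mem_Ioo] at hr hφ
      have hs : √((r * Real.cos φ) ^ 2 + (r * Real.sin φ) ^ 2) = r := by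
        rw [mul_pow, mul_pow, ← mul_add, Real.cos_sq_add_sin_sq, mul_one, Real.sqrt_sq hr.le]
      simp only [f, polarCoord_symm_apply, smul_eq_mul]
      by_cases h0 : 0 < φ
      · have hsin : 0 < Real.sin φ := Real.sin_pos_of_pos_of_lt_pi h0 hφ.2
        rw [Set.indicator_of_mem (show r * Real.sin φ ∈ Set.Ioi 0 from mul_pos hr hsin),
          Set.indicator_of_mem (show φ ∈ Set.Ioo 0 Real.pi from ⟨h0, hφ.2⟩), hs,
          ← mul_assoc r⁻¹, inv_mul_cancel₀ hr.ne', one_mul, mul_pow, pow_succ,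
          ENNReal.ofReal_mul (by positivity), ENNReal.ofReal_mul (by positivity)]
        ring
      · have hsin : Real.sin φ ≤ 0 :=
          Real.sin_nonpos_of_nonpos_of_neg_pi_le (not_lt.1 h0) hφ.1.le
        rw [Set.indicator_of_notMem, Set.indicator_of_notMem]
        · simp
        · simp [h0]
        · simpa using mul_nonpos_of_nonneg_of_nonpos hr.le hsin
    _ = (∫⁻ r in Set.Ioi (0 : ℝ), ENNReal.ofReal (r ^ (q + 1)) * G r) *
        ∫⁻ φ in Set.Ioo (-Real.pi) Real.pi, (Set.Ioo 0 Real.pi).indicator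
          (fun φ => ENNReal.ofReal (Real.sin φ ^ q) * F (Real.cos φ)) φ := by
      rw [Measure.volume_eq_prod, ← Measure.prod_restrict, lintegral_prod_mul
        (f := fun r : ℝ => ENNReal.ofReal (r ^ (q + 1)) * G r)]
      · fun_prop
      · exact (Measurable.indicator (by fun_prop) measurableSet_Ioo).aemeasurable
    _ = _ := by
      rw [mul_comm, setLIntegral_indicator measurableSet_Ioo, Set.inter_eq_left.2]
      exact Set.Ioo_subset_Ioo_left (by linarith [Real.pi_pos])

/-- The substitution `u = cos φ`. -/
lemma lintegral_sin_pow_mul_comp_cos (q : ℕ) (F : ℝ → ENNReal) :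
    ∫⁻ φ in Set.Ioo 0 Real.pi, ENNReal.ofReal (Real.sin φ ^ q) * F (Real.cos φ) =
      ∫⁻ u in Set.Ioo (-1 : ℝ) 1, ENNReal.ofReal ((1 - u ^ 2) ^ (((q : ℝ) - 1) / 2)) * F u := by
  have himg : Real.cos '' Set.Ioo 0 Real.pi = Set.Ioo (-1) 1 := by
    ext u
    constructor
    · rintro ⟨φ, hφ, rfl⟩
      have := Real.sin_pos_of_mem_Ioo hφ
      have h2 := Real.sin_sq_add_cos_sq φ
      constructor <;> nlinarith
    · rintro ⟨h1, h2⟩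
      refine ⟨Real.arccos u, ⟨Real.arccos_pos.2 h2, ?_⟩, Real.cos_arccos h1.le h2.le⟩
      exact lt_of_le_of_ne (Real.arccos_le_pi u) fun h => by
        rw [Real.arccos_eq_pi] at h; linarith
  rw [← himg, lintegral_image_eq_lintegral_abs_deriv_mul measurableSet_Ioo
    (fun φ _ => (Real.hasDerivAt_cos φ).hasDerivWithinAt)
    (Real.injOn_cos.mono Set.Ioo_subset_Icc_self)]
  refine setLIntegral_congr_fun measurableSet_Ioo fun φ hφ => ?_
  have hsin := Real.sin_pos_of_mem_Ioo hφ
  rw [← mul_assoc, ← ENNReal.ofReal_mul (abs_nonneg _), abs_neg, abs_of_pos hsin,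
    ← Real.sin_sq, ← Real.rpow_natCast (Real.sin φ) 2, ← Real.rpow_mul hsin.le]
  congr 2
  nth_rw 2 [← Real.rpow_one (Real.sin φ)]
  rw [← Real.rpow_add hsin, ← Real.rpow_natCast]
  congr 1
  push_cast; ring

/-- The law of `⟪x, θ⟫` under the surface measure, up to a constant. -/
lemma exists_lintegral_toSphere_inner (q : ℕ) (hd : Module.finrank ℝ E = q + 2) (θ : E)
    (hθ : ‖θ‖ = 1) :
    ∃ C : NNReal, C ≠ 0 ∧ ∀ F : ℝ → ENNReal, Measurable F →
      ∫⁻ x : sphere (0 : E) 1, F ⟪(x : E), θ⟫ ∂(volume : Measure E).toSphere =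
      C * ∫⁻ u in Set.Ioo (-1 : ℝ) 1,
        ENNReal.ofReal ((1 - u ^ 2) ^ (((q : ℝ) - 1) / 2)) * F u := by
  have hE : Nontrivial E := Module.nontrivial_of_finrank_pos (R := ℝ) (by omega)
  have : Fact (Module.finrank ℝ E = (q + 1) + 1) := ⟨hd⟩
  have hd' : Module.finrank ℝ (ℝ ∙ θ)ᗮ = q + 1 :=
    Submodule.finrank_orthogonal_span_singleton (by rintro rfl; simp at hθ)
  have hE' : Nontrivial (ℝ ∙ θ)ᗮ := Module.nontrivial_of_finrank_pos (R := ℝ) (by omega)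
  obtain ⟨c, hc, H⟩ := exists_lintegral_eq_orthogonal_span θ hθ
  let G : ℝ → ENNReal := (Set.Iio 1).indicator 1
  have hG : Measurable G := measurable_one.indicator measurableSet_Iio
  let J : ENNReal := ∫⁻ r in Set.Ioi 0, ENNReal.ofReal (r ^ (q + 1)) * G r
  have hJ : J = ENNReal.ofReal (1 / (q + 2)) := by
    have h0 : J = ∫⁻ r in Set.Ioo (0 : ℝ) 1, ENNReal.ofReal (r ^ (q + 1)) := by
      rw [← Set.Iio_inter_Ioi, ← setLIntegral_indicator measurableSet_Iio]
      refine lintegral_congr fun r => ?_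
      by_cases hr : r < 1 <;> simp [G, hr]
    rw [h0, Measure.restrict_congr_set Ioo_ae_eq_Ioc, ← ofReal_integral_eq_lintegral_ofReal
      (intervalIntegral.intervalIntegrable_pow _).1, ← integral_of_le zero_le_one, integral_pow]
    · congr 1; push_cast; simp [add_assoc]; norm_num
    · filter_upwards [ae_restrict_mem measurableSet_Ioc] with y hy using pow_nonneg hy.1.le _
  let S : ENNReal := (volume : Measure (ℝ ∙ θ)ᗮ).toSphere Set.univ
  have key (F : ℝ → ENNReal) (hF : Measurable F) :
      c * ((∫⁻ x : sphere (0 : E) 1, F ⟪(x : E), θ⟫ ∂(volume : Measure E).toSphere) * J) =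
      S * ((∫⁻ u in Set.Ioo (-1 : ℝ) 1,
        ENNReal.ofReal ((1 - u ^ 2) ^ (((q : ℝ) - 1) / 2)) * F u) * J) := by
    have h1 := lintegral_angular_mul_radial (volume : Measure E)
      (h := fun x => F ⟪x, θ⟫) (hF.comp (measurable_id.inner_const)) hG
    have h2 := H (fun t n => F (n⁻¹ * t) * G n) (by unfold Function.uncurry; fun_prop)
    rw [hd] at h1
    simp only [inner_smul_left, RCLike.conj_to_real] at h1
    rw [← lintegral_sin_pow_mul_comp_cos, ← lintegral_halfPlane_polar q hF hG]
    change _ * (_ * ∫⁻ r in Set.Ioi 0, ENNReal.ofReal (r ^ (q + 2 - 1)) * G r) = _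
    rw [← h1, h2, ← lintegral_const_mul']
    · refine lintegral_congr fun t => ?_
      have h3 := lintegral_angular_mul_radial (volume : Measure (ℝ ∙ θ)ᗮ) (h := fun _ => 1)
        measurable_const (G := fun s => F ((√(t ^ 2 + s ^ 2))⁻¹ * t) * G √(t ^ 2 + s ^ 2))
        (by fun_prop)
      rw [hd', lintegral_one] at h3
      simp only [one_mul, add_tsub_cancel_right] at h3
      rw [h3]
    · exact measure_ne_top _ _
  have hS : S ≠ ⊤ := measure_ne_top _ _
  have hS0 : S ≠ 0 := by
    simpa only [S, ne_eq, Measure.measure_univ_eq_zero] using Measure.toSphere_ne_zero _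
  refine ⟨S.toNNReal / c, div_ne_zero (by simp [ENNReal.toNNReal_eq_zero_iff, hS, hS0]) hc,
    fun F hF => ?_⟩
  have hJ0 : J ≠ 0 := by rw [hJ]; simp; positivity
  have hJt : J ≠ ⊤ := by rw [hJ]; simp
  have h := key F hF
  rw [← mul_assoc, ← mul_assoc, ENNReal.mul_left_inj hJ0 hJt] at h
  rw [ENNReal.coe_div hc, ENNReal.coe_toNNReal hS, ENNReal.div_eq_inv_mul, mul_assoc, ← h,
    ← mul_assoc, ENNReal.inv_mul_cancel (by simpa using hc) (by simp), one_mul]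

end Sphere

section Interval

lemma continuous_one_sub_sq_rpow {a : ℝ} (ha : 0 ≤ a) :
    Continuous fun u : ℝ => (1 - u ^ 2) ^ a :=
  (by fun_prop : Continuous fun u : ℝ => 1 - u ^ 2).rpow_const fun _ => Or.inr ha

lemma weight_exponent_nonneg {p : ℕ} (hp : 4 ≤ p) : 0 ≤ ((p : ℝ) - 3) / 2 := by
  have : (4 : ℝ) ≤ p := by exact_mod_cast hp
  linarith

lemma integral_quartic_mul_weight {p : ℕ} (hp : 4 ≤ p) (κ c₀ c₁ c₂ c₃ c₄ : ℝ) :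
    ∫ u in (-1 : ℝ)..1, (c₀ + c₁ * u + c₂ * u ^ 2 + c₃ * u ^ 3 + c₄ * u ^ 4) *
      ((1 - u ^ 2) ^ (((p : ℝ) - 3) / 2) * Real.exp (κ * u)) =
      c₀ * mInt p κ 0 + c₁ * mInt p κ 1 + c₂ * mInt p κ 2 + c₃ * mInt p κ 3 +
        c₄ * mInt p κ 4 := by
  have hw := continuous_one_sub_sq_rpow (weight_exponent_nonneg hp)
  let c : Fin 5 → ℝ := ![c₀, c₁, c₂, c₃, c₄]
  have hc : ∑ ℓ : Fin 5, c ℓ * mInt p κ ℓ = c₀ * mInt p κ 0 + c₁ * mInt p κ 1 +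
      c₂ * mInt p κ 2 + c₃ * mInt p κ 3 + c₄ * mInt p κ 4 := by
    simp [c, Fin.sum_univ_five]
  rw [← hc]
  simp_rw [mInt, ← intervalIntegral.integral_const_mul]
  rw [← intervalIntegral.integral_finsetSum fun ℓ _ =>
    Continuous.intervalIntegrable (by fun_prop) _ _]
  refine intervalIntegral.integral_congr fun u _ => ?_
  simp [c, Fin.sum_univ_five]
  ring

lemma mInt_neg (p : ℕ) (κ : ℝ) (ℓ : ℕ) : mInt p (-κ) ℓ = (-1) ^ ℓ * mInt p κ ℓ := by
  have h := intervalIntegral.integral_comp_neg (a := -1) (b := 1)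
    fun u : ℝ => u ^ ℓ * (1 - u ^ 2) ^ (((p : ℝ) - 3) / 2) * Real.exp (κ * u)
  rw [neg_neg] at h
  rw [mInt, mInt, ← h, ← intervalIntegral.integral_const_mul]
  refine intervalIntegral.integral_congr fun u _ => ?_
  have h1 : (-1 : ℝ) ^ ℓ * (-u) ^ ℓ = u ^ ℓ := by rw [← mul_pow]; ring
  simp only [neg_sq, mul_neg, neg_mul]
  rw [← mul_assoc, ← mul_assoc, h1]

/-- Integration by parts against `(1 - u²)^β exp (κ u)`, which vanishes at `±1`. -/
lemma mul_integral_one_sub_sq_rpow_mul_exp {β : ℝ} (hβ : 1 ≤ β) (κ : ℝ) :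
    κ * ∫ u in (-1 : ℝ)..1, (1 - u ^ 2) ^ β * Real.exp (κ * u) =
      2 * β * ∫ u in (-1 : ℝ)..1, u * ((1 - u ^ 2) ^ (β - 1) * Real.exp (κ * u)) := by
  have hw := continuous_one_sub_sq_rpow (zero_le_one.trans hβ)
  have hw' := continuous_one_sub_sq_rpow (sub_nonneg.2 hβ)
  have hd (u : ℝ) : HasDerivAt (fun u : ℝ => (1 - u ^ 2) ^ β * Real.exp (κ * u))
      (κ * ((1 - u ^ 2) ^ β * Real.exp (κ * u)) -
        2 * β * (u * ((1 - u ^ 2) ^ (β - 1) * Real.exp (κ * u)))) u := by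
    have h1 : HasDerivAt (fun u : ℝ => 1 - u ^ 2) (-(2 * u)) u := by
      simpa using (hasDerivAt_pow 2 u).const_sub 1
    have h2 : HasDerivAt (fun u : ℝ => Real.exp (κ * u)) (Real.exp (κ * u) * κ) u := by
      simpa using ((hasDerivAt_id u).const_mul κ).exp
    refine ((h1.rpow_const (Or.inr hβ)).mul h2).congr_deriv ?_
    ring
  have h := integral_eq_sub_of_hasDerivAt (a := -1) (b := 1) (fun u _ => hd u)
    (Continuous.intervalIntegrable (by fun_prop) _ _)
  rw [intervalIntegral.integral_sub (Continuous.intervalIntegrable (by fun_prop) _ _)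
    (Continuous.intervalIntegrable (by fun_prop) _ _), intervalIntegral.integral_const_mul,
    intervalIntegral.integral_const_mul] at h
  simpa [Real.zero_rpow (by linarith : β ≠ 0), sub_eq_zero] using h

lemma one_sub_sq_rpow_add_one {a u : ℝ} (ha : 0 ≤ a) (hu : u ∈ Set.uIcc (-1 : ℝ) 1) :
    (1 - u ^ 2) ^ (a + 1) = (1 - u ^ 2) * (1 - u ^ 2) ^ a := by
  rw [Set.uIcc_of_le (by norm_num)] at hu
  rw [Real.rpow_add_one' (by nlinarith [hu.1, hu.2]) (by linarith), mul_comm]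

lemma integral_one_sub_sq_rpow_add_one_mul_exp {p : ℕ} (hp : 4 ≤ p) (κ : ℝ) :
    ∫ u in (-1 : ℝ)..1, (1 - u ^ 2) ^ (((p : ℝ) - 3) / 2 + 1) * Real.exp (κ * u) =
      mInt p κ 0 - mInt p κ 2 := by
  trans 1 * mInt p κ 0 + 0 * mInt p κ 1 + (-1) * mInt p κ 2 + 0 * mInt p κ 3 + 0 * mInt p κ 4
  · rw [← integral_quartic_mul_weight hp]
    refine intervalIntegral.integral_congr fun u hu => ?_
    simp only [one_sub_sq_rpow_add_one (weight_exponent_nonneg hp) hu]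
    ring
  · ring

lemma mul_mInt_zero_sub_two {p : ℕ} (hp : 4 ≤ p) (κ : ℝ) :
    κ * (mInt p κ 0 - mInt p κ 2) = (p - 1) * mInt p κ 1 := by
  have ha := weight_exponent_nonneg hp
  rw [← integral_one_sub_sq_rpow_add_one_mul_exp hp,
    mul_integral_one_sub_sq_rpow_mul_exp (by linarith)]
  congr 1
  · ring
  · rw [mInt]
    refine intervalIntegral.integral_congr fun u hu => ?_
    simp only [add_sub_cancel_right]
    ring

lemma mul_mInt_zero_sub_two_add_four {p : ℕ} (hp : 4 ≤ p) (κ : ℝ) :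
    κ * (mInt p κ 0 - 2 * mInt p κ 2 + mInt p κ 4) =
      (p + 1) * (mInt p κ 1 - mInt p κ 3) := by
  have ha := weight_exponent_nonneg hp
  have h := mul_integral_one_sub_sq_rpow_mul_exp
    (β := ((p : ℝ) - 3) / 2 + 1 + 1) (by linarith) κ
  have hl := integral_quartic_mul_weight hp κ 1 0 (-2) 0 1
  have hr := integral_quartic_mul_weight hp κ 0 1 0 (-1) 0
  calc
    _ = κ * ∫ u in (-1 : ℝ)..1,
        (1 - u ^ 2) ^ (((p : ℝ) - 3) / 2 + 1 + 1) * Real.exp (κ * u) := by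
      trans κ * (1 * mInt p κ 0 + 0 * mInt p κ 1 + (-2) * mInt p κ 2 + 0 * mInt p κ 3 +
        1 * mInt p κ 4)
      · ring
      rw [← hl]
      congr 1
      refine intervalIntegral.integral_congr fun u hu => ?_
      simp only [one_sub_sq_rpow_add_one (add_nonneg ha zero_le_one) hu,
        one_sub_sq_rpow_add_one ha hu]
      ring
    _ = (p + 1) * ∫ u in (-1 : ℝ)..1, (0 + 1 * u + 0 * u ^ 2 + (-1) * u ^ 3 + 0 * u ^ 4) *
        ((1 - u ^ 2) ^ (((p : ℝ) - 3) / 2) * Real.exp (κ * u)) := by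
      rw [h]
      congr 1
      · ring
      refine intervalIntegral.integral_congr fun u hu => ?_
      simp only [add_sub_cancel_right, one_sub_sq_rpow_add_one ha hu]
      ring
    _ = _ := by rw [hr]; ring

lemma mInt_zero_sub_two_pos {p : ℕ} (hp : 4 ≤ p) (κ : ℝ) : 0 < mInt p κ 0 - mInt p κ 2 := by
  have hw := continuous_one_sub_sq_rpow (add_nonneg (weight_exponent_nonneg hp) zero_le_one)
  rw [← integral_one_sub_sq_rpow_add_one_mul_exp hp]
  refine intervalIntegral_pos_of_pos_on (Continuous.intervalIntegrable (by fun_prop) _ _)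
    (fun u hu => ?_) (by norm_num)
  have : 0 < 1 - u ^ 2 := by nlinarith [hu.1, hu.2]
  positivity

lemma mInt_zero_pos {p : ℕ} (hp : 4 ≤ p) (κ : ℝ) : 0 < mInt p κ 0 := by
  have hw := continuous_one_sub_sq_rpow (weight_exponent_nonneg hp)
  refine intervalIntegral_pos_of_pos_on (Continuous.intervalIntegrable (by fun_prop) _ _)
    (fun u hu => ?_) (by norm_num)
  have : 0 < 1 - u ^ 2 := by nlinarith [hu.1, hu.2]
  positivity

/-- `U` and `U²` are nonnegatively correlated under the density proportional to
`(1 - u²)^((p - 3) / 2) exp (κ u)`. -/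
lemma mInt_one_mul_two_le {p : ℕ} (hp : 4 ≤ p) {κ : ℝ} (hκ : 0 < κ) :
    mInt p κ 1 * mInt p κ 2 ≤ mInt p κ 0 * mInt p κ 3 := by
  have hw := continuous_one_sub_sq_rpow (weight_exponent_nonneg hp)
  let w (κ u : ℝ) : ℝ := (1 - u ^ 2) ^ (((p : ℝ) - 3) / 2) * Real.exp (κ * u)
  let P (κ u : ℝ) : ℝ := (mInt p κ 3 + -mInt p κ 2 * u + -mInt p κ 1 * u ^ 2 +
    mInt p κ 0 * u ^ 3 + 0 * u ^ 4) * w κ u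
  have hinner (κ u : ℝ) : ∫ v in (-1 : ℝ)..1, (u - v) ^ 2 * (u + v) * (w κ u * w κ v) =
      P κ u := by
    trans w κ u * ∫ v in (-1 : ℝ)..1,
      (u ^ 3 + -u ^ 2 * v + -u * v ^ 2 + 1 * v ^ 3 + 0 * v ^ 4) * w κ v
    · rw [← intervalIntegral.integral_const_mul]
      refine intervalIntegral.integral_congr fun v hv => ?_
      ring
    · rw [integral_quartic_mul_weight hp]
      simp only [P]
      ring
  have houter (κ : ℝ) : ∫ u in (-1 : ℝ)..1, P κ u =
      2 * (mInt p κ 0 * mInt p κ 3 - mInt p κ 1 * mInt p κ 2) := by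
    rw [integral_quartic_mul_weight hp]
    ring
  have hnonneg : 0 ≤ ∫ u in (-1 : ℝ)..1, (P κ u - P (-κ) u) := by
    refine intervalIntegral.integral_nonneg (by norm_num) fun u hu => ?_
    rw [← hinner, ← hinner, ← intervalIntegral.integral_sub
      (Continuous.intervalIntegrable (by fun_prop) _ _)
      (Continuous.intervalIntegrable (by fun_prop) _ _)]
    refine intervalIntegral.integral_nonneg (by norm_num) fun v hv => ?_
    have hu' : 0 ≤ 1 - u ^ 2 := by nlinarith [hu.1, hu.2]
    have hv' : 0 ≤ 1 - v ^ 2 := by nlinarith [hv.1, hv.2]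
    have hexp : 0 ≤ (u + v) * (Real.exp (κ * (u + v)) - Real.exp (-κ * (u + v))) := by
      rcases le_total 0 (u + v) with h | h
      · refine mul_nonneg h (sub_nonneg.2 (Real.exp_le_exp.2 ?_))
        nlinarith
      · refine mul_nonneg_of_nonpos_of_nonpos h (sub_nonpos.2 (Real.exp_le_exp.2 ?_))
        nlinarith
    calc
      0 ≤ (u - v) ^ 2 * ((1 - u ^ 2) ^ (((p : ℝ) - 3) / 2) *
          (1 - v ^ 2) ^ (((p : ℝ) - 3) / 2)) *
          ((u + v) * (Real.exp (κ * (u + v)) - Real.exp (-κ * (u + v)))) := by positivity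
      _ = _ := by
        simp only [w, mul_add, Real.exp_add]
        ring
  rw [intervalIntegral.integral_sub (Continuous.intervalIntegrable (by fun_prop) _ _)
    (Continuous.intervalIntegrable (by fun_prop) _ _), houter, houter] at hnonneg
  simp only [mInt_neg] at hnonneg
  linarith

lemma mInt_zero_mul_le {p : ℕ} (hp : 4 ≤ p) {κ : ℝ} (hκ : 0 < κ) :
    (p - 1) * (mInt p κ 0 * (mInt p κ 0 - 2 * mInt p κ 2 + mInt p κ 4)) ≤
      (p + 1) * (mInt p κ 0 - mInt p κ 2) ^ 2 := by
  have hp' : (4 : ℝ) ≤ p := by exact_mod_cast hp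
  have h1 := mul_mInt_zero_sub_two hp κ
  have h2 := mul_mInt_zero_sub_two_add_four hp κ
  have h3 := mInt_one_mul_two_le hp hκ
  refine le_of_mul_le_mul_left ?_ hκ
  calc
    _ = ((p : ℝ) - 1) * (p + 1) * (mInt p κ 0 * (mInt p κ 1 - mInt p κ 3)) := by
      linear_combination ((p : ℝ) - 1) * mInt p κ 0 * h2
    _ ≤ ((p : ℝ) - 1) * (p + 1) * (mInt p κ 1 * (mInt p κ 0 - mInt p κ 2)) := by
      refine mul_le_mul_of_nonneg_left (by linarith) ?_
      exact mul_nonneg (by linarith) (by linarith)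
    _ = _ := by
      linear_combination -((p : ℝ) + 1) * (mInt p κ 0 - mInt p κ 2) * h1

end Interval

section Fvml

variable {p : ℕ}

lemma exists_map_inner_sphereSurface (hp : 4 ≤ p) (θ : EuclideanSpace ℝ (Fin p)) (hθ : ‖θ‖ = 1) :
    ∃ C : ℝ, 0 < C ∧ ∀ h : ℝ → ℝ, Measurable h →
      ∫ x, h ⟪(x : EuclideanSpace ℝ (Fin p)), θ⟫ ∂sphereSurface p =
        C * ∫ u in (-1 : ℝ)..1, (1 - u ^ 2) ^ (((p : ℝ) - 3) / 2) * h u := by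
  obtain ⟨q, rfl⟩ := Nat.exists_eq_add_of_le' (show 2 ≤ p by omega)
  obtain ⟨C, hC, H⟩ := exists_lintegral_toSphere_inner q (by simp) θ hθ
  refine ⟨C, by positivity, fun h hh => ?_⟩
  have hq : (((q + 2 : ℕ) : ℝ) - 3) / 2 = ((q : ℝ) - 1) / 2 := by push_cast; ring
  have hinner : Measurable fun x : sphere (0 : EuclideanSpace ℝ (Fin (q + 2))) 1 =>
      ⟪(x : EuclideanSpace ℝ (Fin (q + 2))), θ⟫ :=
    measurable_subtype_coe.inner_const
  have hw : Measurable fun u : ℝ => (1 - u ^ 2) ^ (((q : ℝ) - 1) / 2) := by fun_prop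
  have hmap : Measure.map (fun x : sphere (0 : EuclideanSpace ℝ (Fin (q + 2))) 1 =>
      ⟪(x : EuclideanSpace ℝ (Fin (q + 2))), θ⟫) (sphereSurface (q + 2)) =
      C • (volume.restrict (Set.Ioo (-1 : ℝ) 1)).withDensity
        fun u => ENNReal.ofReal ((1 - u ^ 2) ^ (((q : ℝ) - 1) / 2)) := by
    refine Measure.ext_of_lintegral _ fun F hF => ?_
    rw [lintegral_map hF hinner, sphereSurface, H F hF, lintegral_smul_measure,
      lintegral_withDensity_eq_lintegral_mul _ hw.ennreal_ofReal hF]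
    rfl
  rw [← integral_map (f := h) hinner.aemeasurable hh.aestronglyMeasurable, hmap,
    integral_smul_nnreal_measure,
    integral_withDensity_eq_integral_toReal_smul hw.ennreal_ofReal (by simp), hq,
    intervalIntegral.integral_of_le (by norm_num), ← integral_Ioc_eq_integral_Ioo]
  rw [NNReal.smul_def, smul_eq_mul]
  congr 1
  refine setIntegral_congr_fun measurableSet_Ioc fun u hu => ?_
  have : 0 ≤ 1 - u ^ 2 := by nlinarith [hu.1, hu.2]
  simp only [smul_eq_mul]
  rw [ENNReal.toReal_ofReal (by positivity)]

instance isFiniteMeasure_sphereSurface : IsFiniteMeasure (sphereSurface p) := by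
  unfold sphereSurface; infer_instance

lemma integrable_of_continuous_sphere {μ : Measure (sphere (0 : EuclideanSpace ℝ (Fin p)) 1)}
    [IsFiniteMeasure μ] {f : sphere (0 : EuclideanSpace ℝ (Fin p)) 1 → ℝ} (hf : Continuous f) :
    Integrable f μ :=
  hf.integrable_of_hasCompactSupport (.of_compactSpace f)

lemma integral_exp_sphereSurface_pos (hp : 4 ≤ p) (θ : EuclideanSpace ℝ (Fin p)) (κ : ℝ) :
    0 < ∫ y : sphere (0 : EuclideanSpace ℝ (Fin p)) 1,
      Real.exp (κ * ⟪(y : EuclideanSpace ℝ (Fin p)), θ⟫) ∂(sphereSurface p) := by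
  have : NeZero p := ⟨by omega⟩
  have : NeZero (sphereSurface p) := ⟨by unfold sphereSurface; exact Measure.toSphere_ne_zero _⟩
  exact integral_exp_pos (integrable_of_continuous_sphere (by fun_prop))

lemma isProbabilityMeasure_fvml (hp : 4 ≤ p) (θ : EuclideanSpace ℝ (Fin p)) (κ : ℝ) :
    IsProbabilityMeasure (fvml p θ κ) := by
  have hZ := integral_exp_sphereSurface_pos hp θ κ
  constructor
  rw [fvml, withDensity_apply _ MeasurableSet.univ, Measure.restrict_univ,
    ← ofReal_integral_eq_lintegral_ofReal (integrable_of_continuous_sphere (by fun_prop))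
      (ae_of_all _ fun x => by positivity), MeasureTheory.integral_div, div_self hZ.ne', ENNReal.ofReal_one]

lemma integral_fvml (hp : 4 ≤ p) (θ : EuclideanSpace ℝ (Fin p)) (hθ : ‖θ‖ = 1) (κ : ℝ)
    {h : ℝ → ℝ} (hh : Measurable h) :
    ∫ x, h ⟪(x : EuclideanSpace ℝ (Fin p)), θ⟫ ∂fvml p θ κ =
      (∫ u in (-1 : ℝ)..1, h u * ((1 - u ^ 2) ^ (((p : ℝ) - 3) / 2) * Real.exp (κ * u))) /
        mInt p κ 0 := by
  have hZ := integral_exp_sphereSurface_pos hp θ κ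
  obtain ⟨C, hC, H⟩ := exists_map_inner_sphereSurface hp θ hθ
  rw [fvml, integral_withDensity_eq_integral_toReal_smul (by fun_prop) (by simp)]
  have h0 := H (fun u => Real.exp (κ * u)) (by fun_prop)
  have h1 := H (fun u => Real.exp (κ * u) * h u) (by fun_prop)
  have hm : mInt p κ 0 = ∫ u in (-1 : ℝ)..1, (1 - u ^ 2) ^ (((p : ℝ) - 3) / 2) *
      Real.exp (κ * u) := by simp [mInt]
  calc
    _ = (∫ x, Real.exp (κ * ⟪(x : EuclideanSpace ℝ (Fin p)), θ⟫) *
          h ⟪(x : EuclideanSpace ℝ (Fin p)), θ⟫ ∂sphereSurface p) /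
        ∫ y : sphere (0 : EuclideanSpace ℝ (Fin p)) 1,
          Real.exp (κ * ⟪(y : EuclideanSpace ℝ (Fin p)), θ⟫) ∂(sphereSurface p) := by
      rw [← MeasureTheory.integral_div]
      refine integral_congr_ae (ae_of_all _ fun x => ?_)
      simp only [smul_eq_mul]
      rw [ENNReal.toReal_ofReal (by positivity)]
      ring
    _ = _ := by
      rw [h0, h1, ← hm, mul_div_mul_left _ _ hC.ne']
      congr 1
      refine intervalIntegral.integral_congr fun u _ => ?_
      ring

lemma integral_one_sub_inner_sq_fvml (hp : 4 ≤ p) (θ : EuclideanSpace ℝ (Fin p)) (hθ : ‖θ‖ = 1)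
    (κ : ℝ) : ∫ x, (1 - ⟪(x : EuclideanSpace ℝ (Fin p)), θ⟫ ^ 2) ∂fvml p θ κ = f2 p κ := by
  have h0 := (mInt_zero_pos hp κ).ne'
  rw [integral_fvml hp θ hθ κ (h := fun u => 1 - u ^ 2) (by fun_prop)]
  have h := integral_quartic_mul_weight hp κ 1 0 (-1) 0 0
  rw [f2, e2, one_sub_div h0]
  congr 1
  convert h using 1
  · refine intervalIntegral.integral_congr fun u _ => ?_
    ring
  · ring

lemma integral_sq_one_sub_inner_sq_fvml (hp : 4 ≤ p) (θ : EuclideanSpace ℝ (Fin p))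
    (hθ : ‖θ‖ = 1) (κ : ℝ) :
    ∫ x, (1 - ⟪(x : EuclideanSpace ℝ (Fin p)), θ⟫ ^ 2) ^ 2 ∂fvml p θ κ =
      (mInt p κ 0 - 2 * mInt p κ 2 + mInt p κ 4) / mInt p κ 0 := by
  rw [integral_fvml hp θ hθ κ (h := fun u => (1 - u ^ 2) ^ 2) (by fun_prop)]
  have h := integral_quartic_mul_weight hp κ 1 0 (-2) 0 1
  congr 1
  convert h using 1
  · refine intervalIntegral.integral_congr fun u _ => ?_
    ring
  · ring

lemma f2_pos (hp : 4 ≤ p) (κ : ℝ) : 0 < f2 p κ := by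
  rw [f2, e2, one_sub_div (mInt_zero_pos hp κ).ne']
  exact div_pos (mInt_zero_sub_two_pos hp κ) (mInt_zero_pos hp κ)

open ProbabilityTheory in
/-- The relative variance of `1 - (X'θ)²` is at most `2 / (p - 1)`, uniformly in `κ`. -/
lemma variance_one_sub_inner_sq_fvml_le (hp : 4 ≤ p) (θ : EuclideanSpace ℝ (Fin p))
    (hθ : ‖θ‖ = 1) {κ : ℝ} (hκ : 0 < κ) :
    (p - 1) * Var[fun x : sphere (0 : EuclideanSpace ℝ (Fin p)) 1 =>
      1 - ⟪(x : EuclideanSpace ℝ (Fin p)), θ⟫ ^ 2; fvml p θ κ] ≤ 2 * f2 p κ ^ 2 := by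
  have := isProbabilityMeasure_fvml hp θ κ
  have hp' : (4 : ℝ) ≤ p := by exact_mod_cast hp
  have h0 := mInt_zero_pos hp κ
  have hle := mInt_zero_mul_le hp hκ
  have hE2 : ((p : ℝ) - 1) * ((mInt p κ 0 - 2 * mInt p κ 2 + mInt p κ 4) / mInt p κ 0) ≤
      (p + 1) * f2 p κ ^ 2 := by
    rw [f2, e2, one_sub_div h0.ne', div_pow, mul_div_assoc', mul_div_assoc',
      div_le_div_iff₀ h0 (by positivity)]
    nlinarith [mul_le_mul_of_nonneg_left hle h0.le]
  rw [variance_eq_sub]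
  · simp only [Pi.pow_apply]
    rw [integral_one_sub_inner_sq_fvml hp θ hθ, integral_sq_one_sub_inner_sq_fvml hp θ hθ]
    linarith
  · exact (Continuous.memLp_of_hasCompactSupport (by fun_prop) (.of_compactSpace _))

open ProbabilityTheory in
lemma mul_integral_sq_Ln_sub_one_le (hp : 4 ≤ p) (θ : EuclideanSpace ℝ (Fin p))
    (hθ : ‖θ‖ = 1) {κ : ℝ} (hκ : 0 < κ) {n : ℕ} (hn : 0 < n) :
    (p : ℝ) * ∫ x : Fin n → sphere (0 : EuclideanSpace ℝ (Fin p)) 1,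
        ((∑ i, (1 - ⟪((x i : EuclideanSpace ℝ (Fin p))), θ⟫ ^ 2)) / ((n : ℝ) * f2 p κ) - 1) ^ 2
          ∂(Measure.pi fun _ : Fin n => fvml p θ κ) ≤ 4 / n := by
  have := isProbabilityMeasure_fvml hp θ κ
  have hp' : (4 : ℝ) ≤ p := by exact_mod_cast hp
  have hn' : (0 : ℝ) < n := by exact_mod_cast hn
  have hf := f2_pos hp κ
  let S (x : sphere (0 : EuclideanSpace ℝ (Fin p)) 1) : ℝ :=
    1 - ⟪(x : EuclideanSpace ℝ (Fin p)), θ⟫ ^ 2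
  have hSc : Continuous S := by fun_prop
  have hS : MemLp S 2 (fvml p θ κ) := hSc.memLp_of_hasCompactSupport (.of_compactSpace _)
  have hmean : ∫ x : Fin n → sphere (0 : EuclideanSpace ℝ (Fin p)) 1, ∑ i, S (x i)
      ∂(Measure.pi fun _ => fvml p θ κ) = n * f2 p κ := by
    rw [MeasureTheory.integral_finsetSum]
    · simp_rw [integral_comp_eval (μ := fun _ : Fin n => fvml p θ κ) hS.aestronglyMeasurable]
      simp [S, integral_one_sub_inner_sq_fvml hp θ hθ]
    · exact fun i _ => integrable_comp_eval (integrable_of_continuous_sphere hSc)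
  have hvar := variance_sum_pi (μ := fun _ : Fin n => fvml p θ κ) (X := fun _ => S) fun _ => hS
  rw [variance_eq_integral (by fun_prop)] at hvar
  simp only [Finset.sum_apply, hmean, Finset.sum_const, Finset.card_univ, Fintype.card_fin,
    nsmul_eq_mul] at hvar
  have hle := variance_one_sub_inner_sq_fvml_le hp θ hθ hκ
  calc
    _ = p * ((∫ x : Fin n → sphere (0 : EuclideanSpace ℝ (Fin p)) 1,
        (∑ i, S (x i) - n * f2 p κ) ^ 2 ∂(Measure.pi fun _ => fvml p θ κ)) /
          (n * f2 p κ) ^ 2) := by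
      rw [← MeasureTheory.integral_div]
      congr 2 with x
      rw [div_sub_one (by positivity), div_pow]
    _ = p * Var[S; fvml p θ κ] / (n * f2 p κ ^ 2) := by
      rw [hvar]
      field_simp
    _ ≤ 4 / n := by
      rw [div_le_div_iff₀ (by positivity) hn']
      have h : p * Var[S; fvml p θ κ] ≤ 4 * f2 p κ ^ 2 := by
        have hv := variance_nonneg S (fvml p θ κ)
        have hle' : ((p : ℝ) - 1) * Var[S; fvml p θ κ] ≤ 2 * f2 p κ ^ 2 := hle
        nlinarith
      nlinarith

end Fvml

theorem Ln_to_one_in_quadratic_mean (p : ℕ → ℕ) (hp2 : ∀ n, 2 ≤ p n)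
    (hp : Tendsto (fun n => (p n : ℝ)) atTop atTop)
    (κ : ℕ → ℝ) (hκ : ∀ n, 0 < κ n)
    (θ₀ : (n : ℕ) → EuclideanSpace ℝ (Fin (p n))) (hθ₀ : ∀ n, ‖θ₀ n‖ = 1) :
    Tendsto
      (fun n : ℕ => (p n : ℝ) *
        ∫ x : Fin n → sphere (0 : EuclideanSpace ℝ (Fin (p n))) 1,
          ((∑ i, (1 - ⟪((x i : EuclideanSpace ℝ (Fin (p n)))), θ₀ n⟫ ^ 2)) /
              ((n : ℝ) * f2 (p n) (κ n)) - 1) ^ 2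
          ∂(Measure.pi fun _ : Fin n => fvml (p n) (θ₀ n) (κ n)))
      atTop (nhds 0) := by
  have hlarge : ∀ᶠ n in atTop, 4 ≤ p n := by
    filter_upwards [hp.eventually_ge_atTop 4] with n hn
    exact_mod_cast hn
  refine squeeze_zero' (g := fun n : ℕ => 4 / (n : ℝ)) (Eventually.of_forall fun n => ?_) ?_
    (tendsto_const_div_atTop_nhds_zero_nat 4)
  · exact mul_nonneg (Nat.cast_nonneg _) (integral_nonneg fun x => sq_nonneg _)
  · filter_upwards [hlarge, eventually_gt_atTop 0] with n hn hn0
    exact mul_integral_sq_Ln_sub_one_le hn (θ₀ n) (hθ₀ n) (hκ n) hn0
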